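/- arXiv:0809.1643 — 2 statements merged into one kernel-verified Lean document; each statement's English description precedes it below -/
import Mathlib

section
/- Let p < q be reals, let 1 ≤ r ≤ n be integers, let f be (n+1)-times continuously differentiable on [p,q], and let x, x_0, …, x_n be pairwise distinct points of [p,q]. Then there exists ξ in the smallest closed interval containing x, x_0, …, x_n such that f(x) = Σ_{i=0}^{r−1} f[x_0, …, x_i]·∏_{j=0}^{i−1}(x − x_j) + D_{r,r+1,…,n}[x]·∏_{i=0}^{r−1}(x − x_i) + (f^{(n+1)}(ξ)/(n+1)!)·∏_{i=0}^{n}(x − x_i). -/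
/-- Divided difference `f[y i, y (i+1), …, y j]` defined by the standard recursion
`f[y_i,…,y_j] = (f[y_{i+1},…,y_j] − f[y_i,…,y_{j−1}])/(y_j − y_i)`. -/
noncomputable def divDiff (f : ℝ → ℝ) (y : ℕ → ℝ) (i j : ℕ) : ℝ :=
  if _h : j ≤ i then f (y i)
  else (divDiff f y (i + 1) j - divDiff f y i (j - 1)) / (y j - y i)
termination_by j - i
decreasing_by all_goals omega

/-- Neville iteration: `neville xs x g i j` is the iterate built from the initial
values `g j` (at node `xs j`) over the nodes `xs j, …, xs (j+i)`. -/
noncomputable def neville (xs : ℕ → ℝ) (x : ℝ) (g : ℕ → ℝ) : ℕ → ℕ → ℝ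
  | 0, j => g j
  | i + 1, j =>
      ((xs (i + 1 + j) - x) * neville xs x g i j - (xs j - x) * neville xs x g i (j + 1)) /
        (xs (i + 1 + j) - xs j)

/-- Aitken iteration with base index `r`: `aitken xs x g r i j` is the iterate
`d_{r,r+1,…,i,j}` (for `r ≤ i < j`) built from the initial values `g j` at the nodes `xs j`. -/
noncomputable def aitken (xs : ℕ → ℝ) (x : ℝ) (g : ℕ → ℝ) (r : ℕ) (i j : ℕ) : ℝ :=
  if _h : i ≤ r then ((xs j - x) * g r - (xs r - x) * g j) / (xs j - xs r)
  else ((xs j - x) * aitken xs x g r (i - 1) i - (xs i - x) * aitken xs x g r (i - 1) j) /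
        (xs j - xs i)
termination_by i
decreasing_by all_goals omega

/-- The full Aitken iterate `d_{r,r+1,…,n}` (equal to the initial value when `n = r`). -/
noncomputable def aitkenLast (xs : ℕ → ℝ) (x : ℝ) (g : ℕ → ℝ) (r n : ℕ) : ℝ :=
  if n ≤ r then g n else aitken xs x g r (n - 1) n

/-- Confluent divided difference `g[x,…,x (m times), xi]`, defined using
`g[x,…,x (m times)] = g^{(m−1)}(x)/(m−1)!` and `g[xi] = g xi`. -/
noncomputable def confDD (g : ℝ → ℝ) (x xi : ℝ) : ℕ → ℝ
  | 0 => g xi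
  | m + 1 => (confDD g x xi m - iteratedDeriv m g x / (Nat.factorial m : ℝ)) / (xi - x)

open Polynomial in
theorem aux_dd_coeff (f : ℝ → ℝ) (y : ℕ → ℝ) (m : ℕ) : ∀ i : ℕ,
    Set.InjOn y (Finset.Icc i (i + m) : Finset ℕ) →
    divDiff f y i (i + m) =
      (Lagrange.interpolate (Finset.Icc i (i + m)) y (fun k => f (y k))).coeff m := by
  induction m with
  | zero =>
    intro i _
    rw [divDiff]
    simp
  | succ m ih =>
    intro i hinj
    have hne : y i ≠ y (i + (m + 1)) := by
      intro h
      have := hinj (by simp) (by simp) h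
      omega
    have e1 : (Finset.Icc i (i + (m + 1))).erase (i + (m + 1)) = Finset.Icc i (i + m) := by
      ext k; simp; omega
    have e2 : (Finset.Icc i (i + (m + 1))).erase i = Finset.Icc (i + 1) (i + 1 + m) := by
      ext k; simp; omega
    have hs1 : Set.InjOn y (Finset.Icc i (i + m) : Finset ℕ) :=
      hinj.mono (by rw [← e1]; exact_mod_cast Finset.erase_subset _ _)
    have hs2 : Set.InjOn y (Finset.Icc (i + 1) (i + 1 + m) : Finset ℕ) :=
      hinj.mono (by rw [← e2]; exact_mod_cast Finset.erase_subset _ _)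
    have key : ∀ (P : ℝ[X]) (a b : ℝ), P.degree < ((m + 1 : ℕ) : WithBot ℕ) →
        (P * Lagrange.basisDivisor a b).coeff (m + 1) = P.coeff m * (a - b)⁻¹ := by
      intro P a b hP
      have h0 : P.coeff (m + 1) = 0 := coeff_eq_zero_of_degree_lt hP
      have : P * Lagrange.basisDivisor a b = C (a - b)⁻¹ * (P * X - P * C b) := by
        rw [Lagrange.basisDivisor]; ring
      rw [this, coeff_C_mul, coeff_sub, coeff_mul_X, coeff_mul_C, h0]
      ring
    rw [divDiff, dif_neg (by omega),
      Lagrange.interpolate_eq_add_interpolate_erase (i := i) (j := i + (m + 1)) _ hinj (by simp)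
        (by simp) (by omega), e1, e2, coeff_add, key, key]
    · have a1 : i + (m + 1) = i + 1 + m := by ring
      have a2 : i + (m + 1) - 1 = i + m := by omega
      rw [a2, ih i hs1]
      conv_lhs => rw [a1]
      rw [ih (i + 1) hs2, ← a1]
      have h1 : y i - y (i + (m + 1)) ≠ 0 := sub_ne_zero.2 hne
      have h2 : y (i + (m + 1)) - y i ≠ 0 := sub_ne_zero.2 hne.symm
      rw [← neg_sub (y (i + (m + 1))) (y i)]
      field_simp
      ring
    · have := Lagrange.degree_interpolate_lt (fun k => f (y k)) hs2
      convert this using 2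
      simp
      omega
    · have := Lagrange.degree_interpolate_lt (fun k => f (y k)) hs1
      convert this using 2
      simp
      omega

open Polynomial in
theorem aux_dd_unique (f : ℝ → ℝ) (y : ℕ → ℝ) (m : ℕ)
    (hy : ∀ i j, i ≤ m → j ≤ m → i ≠ j → y i ≠ y j) (P : ℝ[X])
    (hP : P.degree < ((m + 1 : ℕ) : WithBot ℕ)) (he : ∀ i ≤ m, P.eval (y i) = f (y i)) :
    divDiff f y 0 m = P.coeff m := by
  have hinj : Set.InjOn y (Finset.Icc 0 (0 + m) : Finset ℕ) := by
    intro a ha b hb hab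
    by_contra hne
    simp at ha hb
    exact hy a b ha hb hne hab
  have := aux_dd_coeff f y m 0 hinj
  rw [zero_add] at this hinj
  rw [this]
  congr 1
  symm
  apply Lagrange.eq_interpolate_of_eval_eq _ hinj
  · simpa using hP
  · intro i hi
    exact he i (by simpa using hi)

/-- sequence t, X 0, X 1, ... -/
noncomputable def auxCons (t : ℝ) (X : ℕ → ℝ) : ℕ → ℝ := fun i => if i = 0 then t else X (i - 1)

theorem aux_shift (f : ℝ → ℝ) (t : ℝ) (X : ℕ → ℝ) (m : ℕ) : ∀ i,
    divDiff f (auxCons t X) (i + 1) (i + 1 + m) = divDiff f X i (i + m) := by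
  induction m with
  | zero => intro i; rw [divDiff]; conv_rhs => rw [divDiff]
            simp [auxCons]
  | succ m ih =>
    intro i
    rw [divDiff, dif_neg (by omega)]
    conv_rhs => rw [divDiff, dif_neg (by omega)]
    have h1 := ih (i + 1)
    have h2 := ih i
    have a1 : i + 1 + (m + 1) = i + 1 + 1 + m := by ring
    have a2 : i + 1 + (m + 1) - 1 = i + 1 + m := by omega
    have a3 : i + (m + 1) = i + 1 + m := by ring
    have a4 : i + (m + 1) - 1 = i + m := by omega
    rw [a2, a4, h2, a1, h1, a3]
    have : i + 1 + 1 + m - 1 = i + 1 + m := by omega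
    simp [auxCons, this]

theorem aux_newton (f : ℝ → ℝ) (t : ℝ) (X : ℕ → ℝ) (r : ℕ) (h : ∀ i < r, X i ≠ t) :
    f t = (∑ i ∈ Finset.range r, divDiff f X 0 i * ∏ j ∈ Finset.range i, (t - X j))
      + divDiff f (auxCons t X) 0 r * ∏ i ∈ Finset.range r, (t - X i) := by
  induction r with
  | zero => rw [divDiff]; simp [auxCons]
  | succ r ih =>
    rw [ih (fun i hi => h i (by omega)), Finset.sum_range_succ, Finset.prod_range_succ]
    have hne : X r - t ≠ 0 := sub_ne_zero.2 (h r (by omega))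
    have e : divDiff f (auxCons t X) 0 (r + 1) =
        (divDiff f X 0 r - divDiff f (auxCons t X) 0 r) / (X r - t) := by
      rw [divDiff, dif_neg (by omega)]
      have := aux_shift f t X r 0
      simp only [zero_add] at this
      rw [zero_add, add_comm r 1, this]
      simp [auxCons]
    rw [e]
    field_simp
    ring

theorem aux_newton_node (f : ℝ → ℝ) (X : ℕ → ℝ) (r k : ℕ) (hk : k < r)
    (hX : ∀ i j, i ≤ k → j ≤ k → i ≠ j → X i ≠ X j) :
    f (X k) = ∑ i ∈ Finset.range r, divDiff f X 0 i * ∏ j ∈ Finset.range i, (X k - X j) := by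
  have hsub : Finset.range (k + 1) ⊆ Finset.range r := by
    intro a; simp; omega
  rw [← Finset.sum_subset hsub, Finset.sum_range_succ]
  · rw [aux_newton f (X k) X k (fun i hi => hX i k hi.le le_rfl hi.ne)]
    congr 2
    have hinj : Set.InjOn X (Finset.range (k + 1) : Finset ℕ) := by
      intro a ha b hb hab
      by_contra hne
      simp at ha hb
      exact hX a b (by omega) (by omega) hne hab
    have hdeg := Lagrange.degree_interpolate_lt (fun k => f (X k)) hinj
    have hev : ∀ i ≤ k, (Lagrange.interpolate (Finset.range (k + 1)) X
        (fun k => f (X k))).eval (X i) = f (X i) := fun i hi =>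
      Lagrange.eval_interpolate_at_node (fun k => f (X k)) hinj (by simp; omega)
    rw [Finset.card_range] at hdeg
    rw [aux_dd_unique f X k hX _ hdeg hev, aux_dd_unique f (auxCons (X k) X) k _ _ hdeg]
    · intro i hi
      unfold auxCons
      split_ifs
      · exact hev k le_rfl
      · exact hev _ (by omega)
    · intro i j hi hj hij
      unfold auxCons
      split_ifs
      · omega
      · exact hX _ _ (by omega) (by omega) (by omega)
      · exact hX _ _ (by omega) (by omega) (by omega)
      · exact hX _ _ (by omega) (by omega) (by omega)
  · intro i _ hi
    rw [Finset.prod_eq_zero (i := k)]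
    · simp
    · simp at hi ⊢; omega
    · simp

open Polynomial in
theorem aux_neville (X : ℕ → ℝ) (g : ℕ → ℝ) (i : ℕ) : ∀ j,
    (∀ a b, a ≤ i → b ≤ i → a ≠ b → X (j + a) ≠ X (j + b)) →
    ∃ P : ℝ[X], P.natDegree ≤ i ∧ (∀ t, P.eval t = neville X t g i j) ∧
      ∀ k ≤ i, P.eval (X (j + k)) = g (j + k) := by
  induction i with
  | zero =>
    intro j _
    refine ⟨C (g j), by simp, by simp [neville], ?_⟩
    intro k hk
    obtain rfl : k = 0 := by omega
    simp
  | succ i ih =>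
    intro j h
    obtain ⟨P, hP, hPe, hPn⟩ := ih j (fun a b ha hb => h a b (by omega) (by omega))
    obtain ⟨Q, hQ, hQe, hQn⟩ := ih (j + 1) (fun a b ha hb hab => by
      have := h (a + 1) (b + 1) (by omega) (by omega) (by omega)
      convert this using 2 <;> ring)
    have hne : X (i + 1 + j) - X j ≠ 0 := by
      have := h (i + 1) 0 le_rfl (by omega) (by omega)
      rw [add_comm j, add_zero] at this
      exact sub_ne_zero.2 this
    refine ⟨C (X (i + 1 + j) - X j)⁻¹ * ((C (X (i + 1 + j)) - Polynomial.X) * P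
      - (C (X j) - Polynomial.X) * Q), ?_, ?_, ?_⟩
    · refine (natDegree_C_mul_le _ _).trans ((natDegree_sub_le _ _).trans ?_)
      have l : ∀ (c : ℝ) (R : ℝ[X]), R.natDegree ≤ i →
          ((C c - Polynomial.X) * R).natDegree ≤ i + 1 := by
        intro c R hR
        refine natDegree_mul_le.trans ?_
        have : (C c - Polynomial.X : ℝ[X]).natDegree ≤ 1 := by compute_degree
        omega
      exact max_le (l _ _ hP) (l _ _ hQ)
    · intro t
      simp only [eval_mul, eval_sub, eval_C, eval_X, hPe, hQe, neville]
      field_simp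
    · intro k hk
      simp only [eval_mul, eval_sub, eval_C, eval_X]
      rcases Nat.eq_zero_or_pos k with rfl | hk0
      · have := hPn 0 (by omega)
        simp only [add_zero] at this ⊢
        rw [this]
        field_simp
        ring
      · have hq := hQn (k - 1) (by omega)
        rw [show j + 1 + (k - 1) = j + k by omega] at hq
        rw [hq]
        rcases Nat.lt_or_ge i k with hki | hki
        · obtain rfl : k = i + 1 := by omega
          rw [add_comm j (i + 1)]
          field_simp
          ring
        · rw [hPn k hki]
          field_simp
          ring

theorem aux_rolle (p q : ℝ) (hpq : p < q) (m : ℕ) : ∀ (g : ℝ → ℝ) (z : ℕ → ℝ),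
    ContDiffOn ℝ m g (Set.Icc p q) → (∀ i < m, z i < z (i + 1)) →
    (∀ i ≤ m, z i ∈ Set.Icc p q) → (∀ i ≤ m, g (z i) = 0) →
    ∃ ξ ∈ Set.Icc (z 0) (z m), iteratedDerivWithin m g (Set.Icc p q) ξ = 0 := by
  induction m with
  | zero =>
    intro g z _ _ _ h
    exact ⟨z 0, by simp, by simpa using h 0 le_rfl⟩
  | succ m ih =>
    intro g z hg hz hm h0
    have hstep : ∀ i, ∃ c, i ≤ m → c ∈ Set.Ioo (z i) (z (i + 1)) ∧
        derivWithin g (Set.Icc p q) c = 0 := by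
      intro i
      by_cases hi : i ≤ m
      · have h1 := hm i (by omega)
        have h2 := hm (i + 1) (by omega)
        obtain ⟨c, hc, hd⟩ := exists_deriv_eq_zero (f := g) (hz i (by omega))
          (hg.continuousOn.mono (Set.Icc_subset_Icc h1.1 h2.2))
          (by rw [h0 i (by omega), h0 (i + 1) (by omega)])
        refine ⟨c, fun _ => ⟨hc, ?_⟩⟩
        rw [derivWithin_of_mem_nhds, hd]
        exact Icc_mem_nhds (h1.1.trans_lt hc.1) (hc.2.trans_le h2.2)
      · exact ⟨0, fun h => absurd h hi⟩
    choose c hc using hstep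
    have hcI : ∀ i ≤ m, c i ∈ Set.Icc p q := fun i hi =>
      ⟨(hm i (by omega)).1.trans (hc i hi).1.1.le,
        (hc i hi).1.2.le.trans (hm (i + 1) (by omega)).2⟩
    obtain ⟨ξ, hξ, hd⟩ := ih (derivWithin g (Set.Icc p q)) c
      (hg.derivWithin (uniqueDiffOn_Icc hpq) (by norm_cast))
      (fun i hi => (hc i (by omega)).1.2.trans (hc (i + 1) (by omega)).1.1)
      hcI (fun i hi => (hc i hi).2)
    refine ⟨ξ, ⟨(hc 0 (by omega)).1.1.le.trans hξ.1, hξ.2.trans (hc m le_rfl).1.2.le⟩, ?_⟩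
    rw [iteratedDerivWithin_succ']
    exact hd

open Polynomial in
theorem aux_iter_poly (P : ℝ[X]) (p q : ℝ) (hpq : p < q) (m : ℕ) (t : ℝ)
    (ht : t ∈ Set.Icc p q) :
    iteratedDerivWithin m (fun s => P.eval s) (Set.Icc p q) t =
      (derivative^[m] P).eval t := by
  rw [iteratedDerivWithin_eq_iteratedDeriv (uniqueDiffOn_Icc hpq) (by simpa using (P.contDiff_aeval (𝕜 := ℝ) (n := m)).contDiffAt) ht,
    iteratedDeriv_eq_iterate]
  induction m generalizing P with
  | zero => rfl
  | succ m ih =>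
    rw [Function.iterate_succ_apply, Function.iterate_succ_apply, ← ih]
    have : deriv (fun s => P.eval s) = fun s => (derivative P).eval s := by
      ext s
      simp
    rw [this]

open Polynomial in
theorem aux_error (p q : ℝ) (hpq : p < q) (n : ℕ)
    (f : ℝ → ℝ) (hf : ContDiffOn ℝ (n + 1 : ℕ) f (Set.Icc p q))
    (x : ℝ) (X : ℕ → ℝ)
    (hx : x ∈ Set.Icc p q) (hX : ∀ i ≤ n, X i ∈ Set.Icc p q)
    (hxX : ∀ i ≤ n, X i ≠ x)
    (hXX : ∀ i j, i ≤ n → j ≤ n → i ≠ j → X i ≠ X j)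
    (P : ℝ[X]) (hP : P.natDegree ≤ n) (hPX : ∀ i ≤ n, P.eval (X i) = f (X i)) :
    ∃ ξ ∈ convexHull ℝ (insert x (X '' Set.Iic n)),
      f x = P.eval x + iteratedDerivWithin (n + 1) f (Set.Icc p q) ξ / (Nat.factorial (n + 1) : ℝ)
            * ∏ i ∈ Finset.range (n + 1), (x - X i) := by
  have hw : ∏ i ∈ Finset.range (n + 1), (x - X i) ≠ 0 := by
    rw [Finset.prod_ne_zero_iff]
    intro i hi
    exact sub_ne_zero.2 (hxX i (by simp at hi; omega)).symm
  set w := ∏ i ∈ Finset.range (n + 1), (x - X i) with hwdef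
  set K := (f x - P.eval x) / w with hK
  set R : ℝ[X] := P + C K * Lagrange.nodal (Finset.range (n + 1)) X with hR
  have hRc : R.coeff (n + 1) = K := by
    have h1 : (Lagrange.nodal (Finset.range (n + 1)) X).coeff (n + 1) = 1 := by
      have := (Lagrange.nodal_monic (s := Finset.range (n + 1)) (v := X)).coeff_natDegree
      rwa [Lagrange.natDegree_nodal, Finset.card_range] at this
    rw [hR, coeff_add, coeff_C_mul, h1, coeff_eq_zero_of_natDegree_lt (by omega)]
    ring
  have hRd : R.natDegree ≤ n + 1 := by
    refine (natDegree_add_le _ _).trans (max_le (by omega) ((natDegree_C_mul_le _ _).trans ?_))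
    rw [Lagrange.natDegree_nodal, Finset.card_range]
  have hRx : R.eval x = f x := by
    rw [hR, eval_add, eval_mul, eval_C, Lagrange.eval_nodal, ← hwdef, hK]
    field_simp
    ring
  have hRX : ∀ i ≤ n, R.eval (X i) = f (X i) := by
    intro i hi
    rw [hR, eval_add, eval_mul, Lagrange.eval_nodal_at_node (by simp; omega), hPX i hi]
    ring
  let s : Finset ℝ := insert x ((Finset.range (n + 1)).image X)
  have hs : s.card = n + 2 := by
    rw [Finset.card_insert_of_notMem, Finset.card_image_of_injOn, Finset.card_range]
    · intro a ha b hb hab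
      by_contra hne
      simp at ha hb
      exact hXX a b (by omega) (by omega) hne hab
    · simp only [Finset.mem_image, Finset.mem_range, not_exists, not_and]
      intro i hi
      exact hxX i (by omega)
  have hsP : ∀ t ∈ s, t = x ∨ ∃ i ≤ n, X i = t := by
    intro t ht
    simp only [s, Finset.mem_insert, Finset.mem_image, Finset.mem_range] at ht
    rcases ht with h | ⟨i, hi, h⟩
    · exact Or.inl h
    · exact Or.inr ⟨i, by omega, h⟩
  let z : ℕ → ℝ := fun i => if h : i < n + 2 then s.orderEmbOfFin hs ⟨i, h⟩ else 0
  have hzs : ∀ i ≤ n + 1, z i ∈ s := by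
    intro i hi
    simp only [z, dif_pos (show i < n + 2 by omega)]
    exact Finset.orderEmbOfFin_mem _ _ _
  have hhull : ∀ i ≤ n + 1, z i ∈ convexHull ℝ (insert x (X '' Set.Iic n)) := by
    intro i hi
    apply subset_convexHull
    rcases hsP _ (hzs i hi) with h | ⟨k, hk, h⟩
    · exact Or.inl h
    · exact Or.inr ⟨k, hk, h⟩
  have hRcd : ContDiff ℝ (n + 1 : ℕ) (fun t => R.eval t) := by
    simpa using R.contDiff_aeval (𝕜 := ℝ) (n + 1 : ℕ)
  obtain ⟨ξ, hξ, hd⟩ := aux_rolle p q hpq (n + 1) (f - fun t => R.eval t) z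
    (hf.sub hRcd.contDiffOn) (by
      intro i hi
      simp only [z, dif_pos (show i < n + 2 by omega), dif_pos (show i + 1 < n + 2 by omega)]
      exact (s.orderEmbOfFin hs).strictMono (by simp))
    (by
      intro i hi
      rcases hsP _ (hzs i hi) with h | ⟨k, hk, h⟩
      · rw [h]; exact hx
      · rw [← h]; exact hX k hk)
    (by
      intro i hi
      rcases hsP _ (hzs i hi) with h | ⟨k, hk, h⟩
      · rw [h]; simp [hRx]
      · rw [← h]; simp [hRX k hk])
  have hξh : ξ ∈ convexHull ℝ (insert x (X '' Set.Iic n)) :=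
    (convex_convexHull ℝ _).ordConnected.out (hhull 0 (by omega)) (hhull (n + 1) le_rfl) hξ
  have hξI : ξ ∈ Set.Icc p q := by
    refine convexHull_min ?_ (convex_Icc p q) hξh
    rintro t (rfl | ⟨i, hi, rfl⟩)
    · exact hx
    · exact hX i hi
  refine ⟨ξ, hξh, ?_⟩
  rw [iteratedDerivWithin_sub hξI (uniqueDiffOn_Icc hpq) (hf ξ hξI) hRcd.contDiffWithinAt,
    aux_iter_poly R p q hpq _ _ hξI] at hd
  have hconst : (derivative^[n + 1] R).eval ξ = (Nat.factorial (n + 1) : ℝ) * K := by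
    have h0 : (derivative^[n + 1] R).natDegree = 0 := by
      have := natDegree_iterate_derivative R (n + 1)
      omega
    rw [eq_C_of_natDegree_eq_zero h0, eval_C, coeff_iterate_derivative, zero_add, hRc,
      Nat.descFactorial_self, nsmul_eq_mul]
  rw [sub_eq_zero.1 hd, hconst, hK]
  have : (Nat.factorial (n + 1) : ℝ) ≠ 0 := by positivity
  field_simp
  ring

theorem stmt_2 (p q : ℝ) (hpq : p < q) (r n : ℕ) (hr : 1 ≤ r) (hrn : r ≤ n)
    (f : ℝ → ℝ) (hf : ContDiffOn ℝ (n + 1 : ℕ) f (Set.Icc p q))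
    (x : ℝ) (X : ℕ → ℝ)
    (hx : x ∈ Set.Icc p q) (hX : ∀ i ≤ n, X i ∈ Set.Icc p q)
    (hxX : ∀ i ≤ n, X i ≠ x)
    (hXX : ∀ i j, i ≤ n → j ≤ n → i ≠ j → X i ≠ X j) :
    ∃ ξ ∈ convexHull ℝ (insert x (X '' Set.Iic n)),
      f x = (∑ i ∈ Finset.range r, divDiff f X 0 i * ∏ j ∈ Finset.range i, (x - X j))
        + neville X x (fun j => divDiff f (fun i => if i = 0 then X j else X (i - 1)) 0 r) (n - r) r * ∏ i ∈ Finset.range r, (x - X i)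
        + iteratedDerivWithin (n + 1) f (Set.Icc p q) ξ / (Nat.factorial (n + 1) : ℝ)
            * ∏ i ∈ Finset.range (n + 1), (x - X i) := by
  obtain ⟨Q, hQd, hQe, hQn⟩ := aux_neville X
    (fun j => divDiff f (fun i => if i = 0 then X j else X (i - 1)) 0 r) (n - r) r
    (fun a b ha hb hab => hXX _ _ (by omega) (by omega) (by omega))
  let N : ℕ → Polynomial ℝ := fun i => Lagrange.nodal (Finset.range i) X
  have hN : ∀ i, (N i).natDegree = i := fun i => by
    simp only [N]; rw [Lagrange.natDegree_nodal, Finset.card_range]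
  let P : Polynomial ℝ := (∑ i ∈ Finset.range r, Polynomial.C (divDiff f X 0 i) * N i) + Q * N r
  have hPe : ∀ t, P.eval t =
      (∑ i ∈ Finset.range r, divDiff f X 0 i * ∏ j ∈ Finset.range i, (t - X j))
        + Q.eval t * ∏ i ∈ Finset.range r, (t - X i) := by
    intro t
    simp only [P, N, Polynomial.eval_add, Polynomial.eval_mul, Polynomial.eval_finsetSum,
      Polynomial.eval_C, Lagrange.eval_nodal]
  have hPd : P.natDegree ≤ n := by
    refine (Polynomial.natDegree_add_le _ _).trans (max_le ?_ ?_)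
    · refine Polynomial.natDegree_sum_le_of_forall_le _ _ ?_
      intro i hi
      refine (Polynomial.natDegree_C_mul_le _ _).trans ?_
      rw [hN]
      simp at hi
      omega
    · refine Polynomial.natDegree_mul_le.trans ?_
      rw [hN]
      omega
  have hPX : ∀ i ≤ n, P.eval (X i) = f (X i) := by
    intro k hk
    rw [hPe]
    rcases Nat.lt_or_ge k r with h | h
    · rw [Finset.prod_eq_zero (i := k) (by simpa using h) (by simp), mul_zero, add_zero]
      exact (aux_newton_node f X r k h
        (fun i j hi hj => hXX i j (by omega) (by omega))).symm
    · have h1 := hQn (k - r) (by omega)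
      rw [show r + (k - r) = k by omega] at h1
      rw [h1]
      exact (aux_newton f (X k) X r
        (fun i hi => hXX i k (by omega) (by omega) (by omega))).symm
  obtain ⟨ξ, hξ, h⟩ := aux_error p q hpq n f hf x X hx hX hxX hXX P hPd hPX
  refine ⟨ξ, hξ, ?_⟩
  rw [h, hPe, hQe]
end

section
/- Let p < q be reals, let n ≥ 1 and t ≥ 0 be integers, let f be (n+t+1)-times continuously differentiable on [p,q], and let x, x_0, …, x_n be pairwise distinct points of [p,q]. Define coefficients a_0 = 1 and a_k = −(a_0·A_k(x) + a_1·A_{k−1}(x) + … + a_{k−1}·A_1(x)) for k = 1, …, t. Then there exist points ξ_0, ξ_1, …, ξ_t in the smallest closed interval containing x, x_0, …, x_n such that f^{(t)}(x)/t! = Σ_{j=0}^{t} a_j·Ã^{(t−j)}_{0,1,…,n}[x] + ∏_{i=0}^{n}(x − x_i) · Σ_{j=0}^{t} a_j·f^{(t+n+1−j)}(ξ_j)/(t+n+1−j)!. -/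
open Polynomial in
theorem aux_aitken_eq (n : ℕ) (x : ℝ) (X : ℕ → ℝ) (g : ℕ → ℝ)
    (hXX : ∀ i j, i ≤ n → j ≤ n → i ≠ j → X i ≠ X j) :
    ∀ i j, i < j → j ≤ n → aitken X x g 0 i j
      = (Lagrange.interpolate (insert j (Finset.range (i + 1))) X g).eval x := by
  have hinj : ∀ s : Finset ℕ, (∀ i ∈ s, i ≤ n) → Set.InjOn X s := by
    intro s hs a ha b hb hab
    by_contra hne
    exact hXX a b (hs a ha) (hs b hb) hne hab
  intro i
  induction i with
  | zero =>
    intro j hj hjn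
    have hI := hinj (insert j (Finset.range (0 + 1))) (by intro a; simp; omega)
    have hne : X j - X 0 ≠ 0 := sub_ne_zero.2 (hXX j 0 hjn (by omega) (by omega))
    have hne' : X 0 - X j ≠ 0 := sub_ne_zero.2 (hXX 0 j (by omega) hjn (by omega))
    rw [Lagrange.interpolate_eq_add_interpolate_erase g hI (i := 0) (j := j) (by simp) (by simp)
      (by omega)]
    have e1 : (insert j (Finset.range (0 + 1))).erase j = {0} := by
      ext a; simp; omega
    have e2 : (insert j (Finset.range (0 + 1))).erase 0 = {j} := by
      ext a; simp; omega
    rw [e1, e2, Lagrange.interpolate_singleton, Lagrange.interpolate_singleton, aitken]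
    simp [Lagrange.basisDivisor]
    field_simp
    rw [show X 0 - X j = -(X j - X 0) by ring]
    field_simp
    ring
  | succ i ih =>
    intro j hj hjn
    have hI := hinj (insert j (Finset.range (i + 1 + 1))) (by intro a; simp; omega)
    have hne : X j - X (i+1) ≠ 0 := sub_ne_zero.2 (hXX _ _ hjn (by omega) (by omega))
    have hne' : X (i+1) - X j ≠ 0 := sub_ne_zero.2 (hXX _ _ (by omega) hjn (by omega))
    rw [Lagrange.interpolate_eq_add_interpolate_erase g hI (i := i+1) (j := j) (by simp) (by simp)
      (by omega)]
    have e1 : (insert j (Finset.range (i + 1 + 1))).erase j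
        = insert (i+1) (Finset.range (i + 1)) := by
      ext a; simp; omega
    have e2 : (insert j (Finset.range (i + 1 + 1))).erase (i+1)
        = insert j (Finset.range (i + 1)) := by
      ext a; simp; omega
    rw [e1, e2, aitken]
    simp only [Nat.add_sub_cancel, dif_neg (show ¬ (i + 1 ≤ 0) by omega)]
    rw [ih (i+1) (by omega) (by omega), ih j (by omega) hjn]
    simp only [Lagrange.basisDivisor, eval_add, eval_mul, eval_C, eval_sub, eval_X]
    rw [show X (i+1) - X j = -(X j - X (i+1)) by ring]
    field_simp
    ring

theorem aux_rolle_finset (p q : ℝ) (g g' : ℝ → ℝ) (H : Set ℝ) (hH : H.OrdConnected)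
    (hHpq : H ⊆ Set.Icc p q)
    (hg : ∀ y ∈ Set.Icc p q, HasDerivWithinAt g (g' y) (Set.Icc p q) y)
    (s : ℕ) (T : Finset ℝ) (hT : T.card = s + 1) (hTH : ∀ y ∈ T, y ∈ H) (hT0 : ∀ y ∈ T, g y = 0) :
    ∃ T' : Finset ℝ, T'.card = s ∧ (∀ y ∈ T', y ∈ H) ∧ (∀ y ∈ T', g' y = 0) ∧
      ∀ y ∈ T', y ∉ T := by
  let e := T.orderEmbOfFin hT
  have he : ∀ i, e i ∈ T := fun i => T.orderEmbOfFin_mem hT i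
  have hex : ∀ i : Fin s, ∃ z ∈ Set.Ioo (e i.castSucc) (e i.succ), g' z = 0 := by
    intro i
    have hlt : e i.castSucc < e i.succ := e.strictMono (Fin.castSucc_lt_succ)
    have hsub : Set.Icc (e i.castSucc) (e i.succ) ⊆ Set.Icc p q :=
      (hH.out (hTH _ (he _)) (hTH _ (he _))).trans hHpq
    refine exists_hasDerivAt_eq_zero (f := g) hlt ?_ ?_ ?_
    · intro y hy
      exact ((hg y (hsub hy)).continuousWithinAt).mono hsub
    · rw [hT0 _ (he _), hT0 _ (he _)]
    · intro y hy
      refine (hg y (hsub (Set.Ioo_subset_Icc_self hy))).hasDerivAt ?_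
      exact Filter.mem_of_superset (Icc_mem_nhds hy.1 hy.2) hsub
  choose z hz hz0 using hex
  have hmono : StrictMono z := by
    intro i j hij
    have h1 : e i.succ ≤ e j.castSucc := e.monotone (by
      rw [Fin.le_def]; simp; exact hij)
    exact (hz i).2.trans_le (h1.trans (hz j).1.le)
  refine ⟨Finset.univ.map ⟨z, hmono.injective⟩, by simp, ?_, ?_, ?_⟩
  · intro y hy
    obtain ⟨i, -, rfl⟩ := Finset.mem_map.1 hy
    exact hH.out (hTH _ (he _)) (hTH _ (he _)) (Set.Ioo_subset_Icc_self (hz i))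
  · intro y hy
    obtain ⟨i, -, rfl⟩ := Finset.mem_map.1 hy
    exact hz0 i
  · intro y hy hyT
    obtain ⟨i, -, rfl⟩ := Finset.mem_map.1 hy
    have : (z i) ∈ Set.range e := by
      rw [Finset.range_orderEmbOfFin]; exact hyT
    obtain ⟨j, hj⟩ := this
    have h1 := (hz i).1
    have h2 := (hz i).2
    rw [← hj] at h1 h2
    have h1 := e.lt_iff_lt.1 h1
    have h2 := e.lt_iff_lt.1 h2
    rw [Fin.lt_def] at h1 h2
    simp at h1 h2
    omega

theorem aux_rolle_simple (p q : ℝ) (H : Set ℝ) (hH : H.OrdConnected)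
    (hHpq : H ⊆ Set.Icc p q) (s : ℕ) : ∀ (g : ℕ → ℝ → ℝ)
    (_ : ∀ m < s, ∀ y ∈ Set.Icc p q, HasDerivWithinAt (g m) (g (m+1) y) (Set.Icc p q) y)
    (T : Finset ℝ) (_ : T.card = s + 1) (_ : ∀ y ∈ T, y ∈ H) (_ : ∀ y ∈ T, g 0 y = 0),
    ∃ η ∈ H, g s η = 0 := by
  induction s with
  | zero =>
    intro g _ T hT hTH hT0
    obtain ⟨y, hy⟩ : T.Nonempty := Finset.card_pos.1 (by omega)
    exact ⟨y, hTH y hy, hT0 y hy⟩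
  | succ s ih =>
    intro g hg T hT hTH hT0
    obtain ⟨T', h1, h2, h3, -⟩ :=
      aux_rolle_finset p q (g 0) (g 1) H hH hHpq (hg 0 (by omega)) (s+1) T hT hTH hT0
    exact ih (fun m => g (m+1)) (fun m hm => hg (m+1) (by omega)) T' h1 h2 h3

theorem aux_rolle_mult (p q : ℝ) (H : Set ℝ) (hH : H.OrdConnected)
    (hHpq : H ⊆ Set.Icc p q) (x : ℝ) (hxH : x ∈ H) (s k : ℕ) : ∀ (g : ℕ → ℝ → ℝ)
    (_ : ∀ m < k + s, ∀ y ∈ Set.Icc p q, HasDerivWithinAt (g m) (g (m+1) y) (Set.Icc p q) y)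
    (_ : ∀ m ≤ k, g m x = 0)
    (T : Finset ℝ) (_ : T.card = s) (_ : ∀ y ∈ T, y ∈ H) (_ : ∀ y ∈ T, g 0 y = 0) (_ : x ∉ T),
    ∃ η ∈ H, g (k + s) η = 0 := by
  induction k with
  | zero =>
    intro g hg hgx T hT hTH hT0 hxT
    rw [Nat.zero_add] at *
    refine aux_rolle_simple p q H hH hHpq s g hg (insert x T)
      (by rw [Finset.card_insert_of_notMem hxT, hT]) ?_ ?_
    · simpa using ⟨hxH, hTH⟩
    · simpa using ⟨hgx 0 le_rfl, hT0⟩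
  | succ k ih =>
    intro g hg hgx T hT hTH hT0 hxT
    obtain ⟨T', h1, h2, h3, h4⟩ :=
      aux_rolle_finset p q (g 0) (g 1) H hH hHpq (hg 0 (by omega)) s (insert x T)
      (by rw [Finset.card_insert_of_notMem hxT, hT]) (by simpa using ⟨hxH, hTH⟩)
      (by simpa using ⟨hgx 0 (by omega), hT0⟩)
    have := ih (fun m => g (m+1)) (fun m hm => hg (m+1) (by omega))
      (fun m hm => hgx (m+1) (by omega)) T' h1 h2 h3 (fun h => h4 x h (by simp))
    rwa [show k + 1 + s = k + s + 1 by omega]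

open Polynomial in
theorem aux_iter_eval (P : ℝ[X]) (m : ℕ) (y : ℝ) :
    (derivative^[m] P).eval y = (m.factorial : ℝ) * (taylor y P).coeff m := by
  rw [taylor_coeff, ← factorial_smul_hasseDeriv]
  simp

open Polynomial in
theorem aux_poly (n k : ℕ) (x : ℝ) (X' : ℕ → ℝ) (F : ℕ → ℝ) (c : ℕ → ℝ)
    (hxX : ∀ i ≤ n, X' i ≠ x)
    (hinj : Set.InjOn X' (Finset.range (n + 1) : Finset ℕ)) :
    ∃ P : ℝ[X], (∀ i ≤ n, P.eval (X' i) = F i) ∧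
      (∀ m ≤ k, (derivative^[m] P).eval x = (m.factorial : ℝ) * c m) ∧
      ∀ y, (derivative^[k + (n + 1)] P).eval y = ((k + (n + 1)).factorial : ℝ) *
        ∑ i ∈ Finset.range (n + 1), Lagrange.nodalWeight (Finset.range (n + 1)) X' i *
          ((F i - ∑ m ∈ Finset.range (k + 1), c m * (X' i - x) ^ m) / (X' i - x) ^ (k + 1)) := by
  set v : ℕ → ℝ := fun i =>
    (F i - ∑ m ∈ Finset.range (k + 1), c m * (X' i - x) ^ m) / (X' i - x) ^ (k + 1) with hv
  set Q := Lagrange.interpolate (Finset.range (n + 1)) X' v with hQ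
  set T : ℝ[X] := ∑ m ∈ Finset.range (k + 1), C (c m) * (X - C x) ^ m with hT
  have hQdeg : Q.degree < (Finset.range (n+1)).card := Lagrange.degree_interpolate_lt v hinj
  have hQn : Q.natDegree ≤ n := by
    have := Lagrange.degree_interpolate_le v hinj
    rw [Finset.card_range] at this
    exact natDegree_le_of_degree_le this
  have hQc : Q.coeff n = ∑ i ∈ Finset.range (n + 1),
      Lagrange.nodalWeight (Finset.range (n + 1)) X' i * v i := by
    have := Lagrange.coeff_eq_sum hinj hQdeg
    rw [Finset.card_range, Nat.add_sub_cancel] at this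
    rw [this]
    refine Finset.sum_congr rfl fun i hi => ?_
    rw [hQ, Lagrange.eval_interpolate_at_node v hinj hi, Lagrange.nodalWeight,
      Finset.prod_inv_distrib, div_eq_mul_inv, mul_comm]
  have hTn : T.natDegree ≤ k := by
    refine natDegree_sum_le_of_forall_le _ _ fun m hm => ?_
    refine (natDegree_C_mul_le _ _).trans ?_
    rw [natDegree_pow, natDegree_X_sub_C]
    have := Finset.mem_range.1 hm
    omega
  have hpn : ((X - C x : ℝ[X]) ^ (k+1)).natDegree ≤ k + 1 := by
    rw [natDegree_pow, natDegree_X_sub_C]; omega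
  refine ⟨T + (X - C x) ^ (k + 1) * Q, ?_, ?_, ?_⟩
  · intro i hi
    have h0 : X' i - x ≠ 0 := sub_ne_zero.2 (hxX i hi)
    rw [eval_add, eval_mul, hQ, Lagrange.eval_interpolate_at_node v hinj (by simp; omega), hv, hT]
    simp only [eval_finsetSum, eval_mul, eval_C, eval_pow, eval_sub, eval_X]
    field_simp
    ring
  · intro m hm
    rw [aux_iter_eval]
    congr 1
    have hX : taylor x (X - C x : ℝ[X]) = X := by simp
    rw [map_add, taylor_mul, taylor_pow, hX, hT, map_sum]
    simp only [taylor_mul, taylor_pow, hX, taylor_C, coeff_add, finsetSum_coeff, coeff_C_mul,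
      coeff_X_pow, coeff_X_pow_mul']
    rw [if_neg (by omega)]
    simp
    omega
  · intro y
    rw [aux_iter_eval, ← hQc]
    congr 1
    set P := T + (X - C x) ^ (k + 1) * Q with hP
    have hPn : P.natDegree ≤ k + (n + 1) := by
      refine (natDegree_add_le _ _).trans (max_le (by omega) ?_)
      refine natDegree_mul_le.trans ?_
      omega
    have hc : P.coeff (k + (n + 1)) = Q.coeff n := by
      rw [hP, coeff_add, coeff_eq_zero_of_natDegree_lt (by omega), zero_add,
        show k + (n + 1) = (k + 1) + n by omega, coeff_mul_add_eq_of_natDegree_le hpn hQn]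
      have : ((X - C x : ℝ[X]) ^ (k+1)).coeff (k + 1) = 1 := by
        have h := (monic_X_sub_C x).pow (k+1)
        have h2 := h.coeff_natDegree
        rwa [natDegree_pow, natDegree_X_sub_C, mul_one] at h2
      rw [this, one_mul]
    rw [← hc]
    rcases hPn.lt_or_eq with h | h
    · rw [coeff_eq_zero_of_natDegree_lt h, coeff_eq_zero_of_natDegree_lt]
      rwa [natDegree_taylor]
    · rw [← h, coeff_taylor_natDegree, leadingCoeff]

open Polynomial in
theorem aux_key (p q : ℝ) (hpq : p < q) (n t k : ℕ) (hk : k ≤ t)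
    (f : ℝ → ℝ) (hf : ContDiffOn ℝ (n + t + 1 : ℕ) f (Set.Icc p q))
    (x : ℝ) (X : ℕ → ℝ)
    (hx : x ∈ Set.Icc p q) (hX : ∀ i ≤ n, X i ∈ Set.Icc p q)
    (hxX : ∀ i ≤ n, X i ≠ x)
    (hinj : Set.InjOn X (Finset.range (n + 1) : Finset ℕ)) :
    ∃ η ∈ convexHull ℝ (insert x (X '' Set.Iic n)),
      iteratedDerivWithin (k + (n + 1)) f (Set.Icc p q) η = ((k + (n + 1)).factorial : ℝ) *
        ∑ i ∈ Finset.range (n + 1), Lagrange.nodalWeight (Finset.range (n + 1)) X i *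
          ((f (X i) - ∑ m ∈ Finset.range (k + 1),
            (iteratedDerivWithin m f (Set.Icc p q) x / (m.factorial : ℝ)) * (X i - x) ^ m)
              / (X i - x) ^ (k + 1)) := by
  obtain ⟨P, h1, h2, h3⟩ := aux_poly n k x X (fun i => f (X i))
    (fun m => iteratedDerivWithin m f (Set.Icc p q) x / (m.factorial : ℝ)) hxX hinj
  set H := convexHull ℝ (insert x (X '' Set.Iic n)) with hHdef
  have hsub : insert x (X '' Set.Iic n) ⊆ Set.Icc p q := by
    rintro y (rfl | ⟨i, hi, rfl⟩)
    · exact hx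
    · exact hX i hi
  have hHpq : H ⊆ Set.Icc p q := convexHull_min hsub (convex_Icc p q)
  have hUD : UniqueDiffOn ℝ (Set.Icc p q) := uniqueDiffOn_Icc hpq
  obtain ⟨η, hη, h0⟩ := aux_rolle_mult p q H (convex_convexHull ℝ _).ordConnected hHpq x
    (subset_convexHull ℝ _ (Set.mem_insert _ _)) (n + 1) k
    (fun m y => iteratedDerivWithin m f (Set.Icc p q) y - (derivative^[m] P).eval y)
    (by
      intro m hm y hy
      have hd := (hf.differentiableOn_iteratedDerivWithin (m := m)
        (by exact_mod_cast (by omega : m < n + t + 1)) hUD y hy).hasDerivWithinAt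
      rw [← iteratedDerivWithin_succ] at hd
      have hp := ((derivative^[m] P).hasDerivAt y).hasDerivWithinAt (s := Set.Icc p q)
      rw [← Function.iterate_succ_apply' (f := derivative)] at hp
      exact hd.sub hp)
    (by
      intro m hm
      have : (m.factorial : ℝ) ≠ 0 := by exact_mod_cast m.factorial_ne_zero
      simp only [h2 m hm]
      field_simp
      ring)
    ((Finset.range (n + 1)).image X)
    (by rw [Finset.card_image_of_injOn hinj, Finset.card_range])
    (by
      intro y hy
      obtain ⟨i, hi, rfl⟩ := Finset.mem_image.1 hy
      exact subset_convexHull ℝ _ (Set.mem_insert_of_mem _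
        ⟨i, by have := Finset.mem_range.1 hi; simp; omega, rfl⟩))
    (by
      intro y hy
      obtain ⟨i, hi, rfl⟩ := Finset.mem_image.1 hy
      have := Finset.mem_range.1 hi
      simp [h1 i (by omega)])
    (by
      intro hy
      obtain ⟨i, hi, he⟩ := Finset.mem_image.1 hy
      have := Finset.mem_range.1 hi
      exact hxX i (by omega) he)
  refine ⟨η, hη, ?_⟩
  rw [← h3 η]
  exact sub_eq_zero.1 h0

theorem aux_conv (t : ℕ) (a A c B : ℕ → ℝ) (ha0 : a 0 = 1) (hA0 : A 0 = 1)
    (hak : ∀ m, 1 ≤ m → m ≤ t → a m = -(∑ j ∈ Finset.range m, a j * A (m - j)))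
    (hB : ∀ k ≤ t, ∑ m ∈ Finset.range (k + 1), c m * A (k - m) = B k) :
    c t = ∑ j ∈ Finset.range (t + 1), a j * B (t - j) := by
  have h1 : ∀ m, 1 ≤ m → m ≤ t → ∑ j ∈ Finset.range (m + 1), a j * A (m - j) = 0 := by
    intro m hm hmt
    rw [Finset.sum_range_succ, Nat.sub_self, hA0, mul_one, hak m hm hmt]
    ring
  have h2 : ∑ j ∈ Finset.range (t + 1), a j * B (t - j)
      = ∑ j ∈ Finset.range (t + 1), ∑ m ∈ Finset.range (t - j + 1), c m * (a j * A (t - m - j)) := by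
    refine Finset.sum_congr rfl fun j hj => ?_
    rw [← hB (t - j) (by omega), Finset.mul_sum]
    refine Finset.sum_congr rfl fun m hm => ?_
    rw [show t - j - m = t - m - j by omega]
    ring
  rw [h2, Finset.sum_comm' (t' := Finset.range (t + 1)) (s' := fun m => Finset.range (t - m + 1))
    (by intro j m; simp only [Finset.mem_range]; omega)]
  simp only [← Finset.mul_sum]
  rw [Finset.sum_range_succ, Finset.sum_eq_zero]
  · simp [ha0, hA0]
  · intro m hm
    have := Finset.mem_range.1 hm
    rw [h1 (t - m) (by omega) (by omega), mul_zero]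

theorem stmt_7 (p q : ℝ) (hpq : p < q) (n t : ℕ) (hn : 1 ≤ n)
    (f : ℝ → ℝ) (hf : ContDiffOn ℝ (n + t + 1 : ℕ) f (Set.Icc p q))
    (x : ℝ) (X : ℕ → ℝ)
    (hx : x ∈ Set.Icc p q) (hX : ∀ i ≤ n, X i ∈ Set.Icc p q)
    (hxX : ∀ i ≤ n, X i ≠ x)
    (hXX : ∀ i j, i ≤ n → j ≤ n → i ≠ j → X i ≠ X j)
    (a : ℕ → ℝ) (ha0 : a 0 = 1)
    (hak : ∀ m, 1 ≤ m → m ≤ t →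
      a m = -(∑ j ∈ Finset.range m, a j * aitken X x (fun i => 1 / (X i - x) ^ (m - j)) 0 (n - 1) n)) :
    ∃ ξ : ℕ → ℝ, (∀ j ≤ t, ξ j ∈ convexHull ℝ (insert x (X '' Set.Iic n))) ∧
      iteratedDerivWithin t f (Set.Icc p q) x / (Nat.factorial t : ℝ)
        = (∑ j ∈ Finset.range (t + 1),
              a j * aitken X x (fun i => f (X i) / (X i - x) ^ (t - j)) 0 (n - 1) n)
          + (∏ i ∈ Finset.range (n + 1), (x - X i))
            * ∑ j ∈ Finset.range (t + 1),
                a j * iteratedDerivWithin (t + n + 1 - j) f (Set.Icc p q) (ξ j)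
                  / (Nat.factorial (t + n + 1 - j) : ℝ) := by
  have hinj : Set.InjOn X (Finset.range (n + 1) : Finset ℕ) := by
    intro a ha b hb hab
    by_contra hne
    simp at ha hb
    exact hXX a b (by omega) (by omega) hne hab
  set W := ∏ i ∈ Finset.range (n + 1), (x - X i) with hW
  set w := Lagrange.nodalWeight (Finset.range (n + 1)) X with hw
  have hL : ∀ g : ℕ → ℝ, aitken X x g 0 (n - 1) n
      = W * ∑ i ∈ Finset.range (n + 1), w i * (x - X i)⁻¹ * g i := by
    intro g
    rw [aux_aitken_eq n x X g hXX (n - 1) n (by omega) le_rfl, Nat.sub_add_cancel hn,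
      ← Finset.range_add_one, Lagrange.eval_interpolate_not_at_node g, Lagrange.eval_nodal]
    intro i hi
    have := Finset.mem_range.1 hi
    exact (hxX i (by omega)).symm
  have hA0 : aitken X x (fun i => 1 / (X i - x) ^ 0) 0 (n - 1) n = 1 := by
    rw [aux_aitken_eq n x X _ hXX (n - 1) n (by omega) le_rfl, Nat.sub_add_cancel hn,
      ← Finset.range_add_one]
    have : (fun i => 1 / (X i - x) ^ 0) = (1 : ℕ → ℝ) := by ext; simp
    rw [this, Lagrange.interpolate_one hinj (by simp)]
    simp
  have hkey : ∀ k, ∃ η, k ≤ t → η ∈ convexHull ℝ (insert x (X '' Set.Iic n)) ∧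
      ∑ m ∈ Finset.range (k + 1), iteratedDerivWithin m f (Set.Icc p q) x / (m.factorial : ℝ)
        * aitken X x (fun i => 1 / (X i - x) ^ (k - m)) 0 (n - 1) n
      = aitken X x (fun i => f (X i) / (X i - x) ^ k) 0 (n - 1) n
        + W * (iteratedDerivWithin (k + (n + 1)) f (Set.Icc p q) η
          / ((k + (n + 1)).factorial : ℝ)) := by
    intro k
    by_cases hk : k ≤ t
    swap
    · exact ⟨0, fun h => absurd h hk⟩
    obtain ⟨η, hη, h⟩ := aux_key p q hpq n t k hk f hf x X hx hX hxX hinj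
    refine ⟨η, fun _ => ⟨hη, ?_⟩⟩
    have hfac : ((k + (n + 1)).factorial : ℝ) ≠ 0 := by
      exact_mod_cast (k + (n + 1)).factorial_ne_zero
    rw [h, mul_div_cancel_left₀ _ hfac]
    simp only [hL, Finset.mul_sum]
    rw [Finset.sum_comm, ← Finset.sum_add_distrib]
    refine Finset.sum_congr rfl fun i hi => ?_
    have hi' := Finset.mem_range.1 hi
    have h0 : X i - x ≠ 0 := sub_ne_zero.2 (hxX i (by omega))
    have e1 : ∀ m ∈ Finset.range (k + 1),
        iteratedDerivWithin m f (Set.Icc p q) x / (m.factorial : ℝ)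
          * (W * (w i * (x - X i)⁻¹ * (1 / (X i - x) ^ (k - m))))
        = W * (w i * (x - X i)⁻¹) / (X i - x) ^ k *
          (iteratedDerivWithin m f (Set.Icc p q) x / (m.factorial : ℝ) * (X i - x) ^ m) := by
      intro m hm
      have hm' := Finset.mem_range.1 hm
      have : (X i - x) ^ k = (X i - x) ^ (k - m) * (X i - x) ^ m := by
        rw [← pow_add]; congr 1; omega
      rw [this]
      have h1 : (X i - x) ^ (k - m) ≠ 0 := pow_ne_zero _ h0
      have h2 : (X i - x) ^ m ≠ 0 := pow_ne_zero _ h0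
      rw [one_div, div_eq_mul_inv (W * _), mul_inv]
      field_simp
    rw [Finset.sum_congr rfl e1, ← Finset.mul_sum]
    generalize ∑ m ∈ Finset.range (k + 1),
      iteratedDerivWithin m f (Set.Icc p q) x / (m.factorial : ℝ) * (X i - x) ^ m = S
    rw [show (x - X i) = -(X i - x) by ring, pow_succ, inv_neg]
    field_simp
    ring
  choose η hη using hkey
  refine ⟨fun j => η (t - j), fun j hj => (hη (t - j) (by omega)).1, ?_⟩
  have := aux_conv t a (fun k => aitken X x (fun i => 1 / (X i - x) ^ k) 0 (n - 1) n)
    (fun m => iteratedDerivWithin m f (Set.Icc p q) x / (m.factorial : ℝ)) _ ha0 hA0 hak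
    (fun k hk => (hη k hk).2)
  refine this.trans ?_
  rw [Finset.mul_sum, ← Finset.sum_add_distrib]
  refine Finset.sum_congr rfl fun j hj => ?_
  have hj' := Finset.mem_range.1 hj
  rw [show t + n + 1 - j = t - j + (n + 1) by omega]
  ring
end
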